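/- For all natural numbers x, y, z, v: g(h(x,y,z), z) = y, and if v ≠ z then g(h(x,y,z), v) = g(x,v). -/

import Mathlib

namespace Cpc

/-- The Cantor pairing `c(x,y) = (x+y)(x+y+1)/2 + x`. -/
def cpair (x y : ℕ) : ℕ := (x + y) * (x + y + 1) / 2 + x

/-- Simultaneous computation of the two inverse projections of the Cantor pairing. -/
def lrAux : ℕ → ℕ × ℕ
  | 0 => (0, 0)
  | n + 1 =>
    let p := lrAux n
    if p.2 = 0 then (0, p.1 + 1) else (p.1 + 1, p.2 - 1)

/-- The first projection `l` of the Cantor pairing: `l(c(x,y)) = x`. -/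
def cl (n : ℕ) : ℕ := (lrAux n).1

/-- The second projection `r` of the Cantor pairing: `r(c(x,y)) = y`. -/
def cr (n : ℕ) : ℕ := (lrAux n).2

/-- `l*(x,0) = x`, `l*(x,y+1) = l(l*(x,y))`. -/
def lstar (x : ℕ) : ℕ → ℕ
  | 0 => x
  | y + 1 => cl (lstar x y)

/-- `g(x,y) = r(l*(x,y))`. -/
def g (x y : ℕ) : ℕ := cr (lstar x y)

/-- `h(x,y,0) = c(l(x),y)`, `h(x,y,z+1) = c(h(l(x),y,z), r(x))`. -/
def h : ℕ → ℕ → ℕ → ℕ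
  | x, y, 0 => cpair (cl x) y
  | x, y, z + 1 => cpair (h (cl x) y z) (cr x)

end Cpc

/-!
A natural number `x` codes the infinite sequence `g x = (r x, r (l x), r (l (l x)), …)`, whose head
is `r x` and whose tail is coded by `l x`; consing `y` onto the sequence coded by `x` is `c(x, y)`.
The recursion defining `h` walks down this sequence to the entry with index `z`, replaces it, and
conses the earlier entries back.

That `l` and `r` invert `c` holds because `lrAux` moves from the pair with code `n` to the pair with
code `n + 1`, along each antidiagonal in turn.
-/

namespace Cpc

theorem cpair_zero_succ (y : ℕ) : cpair 0 (y + 1) = cpair y 0 + 1 := by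
  have triangle : (y + 1) * (y + 1 + 1) / 2 = y * (y + 1) / 2 + (y + 1) := by
    simpa only [Nat.add_sub_cancel, Nat.mul_comm] using Nat.triangle_succ (y + 1)
  simp only [cpair, Nat.zero_add, Nat.add_zero, triangle, Nat.add_assoc]

theorem cpair_succ_left (x y : ℕ) : cpair (x + 1) y = cpair x (y + 1) + 1 := by
  simp only [cpair, Nat.add_right_comm x 1 y, Nat.add_assoc]

theorem lrAux_cpair : ∀ x y : ℕ, lrAux (cpair x y) = (x, y)
  | 0, 0 => rfl
  | 0, y + 1 => by simp [cpair_zero_succ, lrAux, lrAux_cpair y 0]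
  | x + 1, y => by simp [cpair_succ_left, lrAux, lrAux_cpair x (y + 1)]
termination_by x y => cpair x y
decreasing_by
  · simp [cpair_zero_succ]
  · simp [cpair_succ_left]

@[simp]
theorem cl_cpair (x y : ℕ) : cl (cpair x y) = x := by rw [cl, lrAux_cpair]

@[simp]
theorem cr_cpair (x y : ℕ) : cr (cpair x y) = y := by rw [cr, lrAux_cpair]

theorem lstar_succ (x n : ℕ) : lstar x (n + 1) = lstar (cl x) n := by
  induction n with
  | zero => rfl
  | succ n ih => exact congrArg cl ih

theorem g_zero (x : ℕ) : g x 0 = cr x := rfl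

theorem g_succ (x n : ℕ) : g x (n + 1) = g (cl x) n := congrArg cr (lstar_succ x n)

@[simp]
theorem g_cpair_zero (x y : ℕ) : g (cpair x y) 0 = y := by rw [g_zero, cr_cpair]

@[simp]
theorem g_cpair_succ (x y n : ℕ) : g (cpair x y) (n + 1) = g x n := by rw [g_succ, cl_cpair]

theorem g_h_eq_update (x y z : ℕ) : g (h x y z) = Function.update (g x) z y := by
  induction z generalizing x with
  | zero =>
    ext (_ | n)
    · simp [h]
    · simp [h, g_succ]
  | succ z ih =>
    ext (_ | n)
    · simp [h, g_zero]
    · simp [h, g_succ, ih, Function.update_apply]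

end Cpc

/-- `g(h(x,y,z), z) = y`, and `g(h(x,y,z), v) = g(x,v)` for `v ≠ z`. -/
theorem g_h_update (x y z v : ℕ) :
    Cpc.g (Cpc.h x y z) z = y ∧ (v ≠ z → Cpc.g (Cpc.h x y z) v = Cpc.g x v) := by
  rw [Cpc.g_h_eq_update]
  exact ⟨Function.update_self .., fun hv => Function.update_of_ne hv ..⟩
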